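/- If a group G admits an injective group homomorphism into a direct product ∏_{i∈I} G_i of sofic groups G_i, then G is sofic. (In particular, inverse limits of sofic groups are sofic.) -/

import Mathlib

/-- Two self-maps of a finite set `A` are `ε`-similar if the number of points where they
differ is at most `ε·|A|`. They are `(1-ε)`-different if they are not `(1-ε)`-similar. -/
def EpsSimilar {A : Type*} [Fintype A] (ε : ℝ) (e f : A → A) : Prop :=
  (Nat.card {a : A // e a ≠ f a} : ℝ) ≤ ε * Fintype.card A

/-- An `(F, ε)`-quasi-action of a group `G` on a finite set `A`:
(a) `φ(ef)` is `ε`-similar to `φ(e)` followed by `φ(f)` for `e, f ∈ F`;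
(b) `φ(1)` is `ε`-similar to the identity;
(c) for `1 ≠ e ∈ F`, `φ(e)` is `(1-ε)`-different from the identity. -/
def IsQuasiAction {G : Type*} [Group G] (F : Finset G) (ε : ℝ)
    {A : Type*} [Fintype A] (φ : G → A → A) : Prop :=
  (∀ e ∈ F, ∀ f ∈ F, EpsSimilar ε (φ (e * f)) (fun a => φ f (φ e a))) ∧
  EpsSimilar ε (φ 1) id ∧
  (∀ e ∈ F, e ≠ 1 → ¬ EpsSimilar (1 - ε) (φ e) id)

/-- A group `G` is sofic if for every finite subset `F ⊆ G` and every `ε ∈ (0,1)` there is an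
`(F, ε)`-quasi-action of `G` on some finite nonempty set. -/
def IsSofic (G : Type*) [Group G] : Prop :=
  ∀ (F : Finset G) (ε : ℝ), 0 < ε → ε < 1 →
    ∃ (A : Type) (_ : Fintype A) (_ : Nonempty A) (φ : G → A → A),
      IsQuasiAction F ε φ

/-!
Each `1 ≠ g ∈ F` survives in some factor, so finitely many coordinates `i₁, …, iₙ` already detect
all of `F \ {1}`. Take quasi-actions of those factors with error `δ = ε / (n + 1)` and let `G` act
coordinatewise on the product `A` of the underlying sets. A coordinate constraint cuts out of `A`
the same proportion of points as it does of that coordinate's factor. Hence, by the union bound, the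
errors add up to at most `n δ ≤ ε`, while a point of `A` is moved as soon as the coordinate
detecting `g` is moved, which happens with proportion more than `1 - δ`.
-/

section PiCard

variable {ι : Type*} {A : ι → Type*}

theorem natCard_pi_eq_mul (j : ι) :
    Nat.card (∀ i, A i) = Nat.card (A j) * Nat.card (∀ i : {i // i ≠ j}, A i) := by
  classical
  rw [← Nat.card_prod, Nat.card_congr (Equiv.piSplitAt j A)]

theorem natCard_pi_subtype_apply (j : ι) (P : A j → Prop) :
    Nat.card {a : ∀ i, A i // P (a j)} =
      Nat.card {x // P x} * Nat.card (∀ i : {i // i ≠ j}, A i) := by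
  classical
  rw [← Nat.card_prod]
  exact Nat.card_congr <|
    ((Equiv.piSplitAt j A).subtypeEquiv fun _ ↦ Iff.rfl).trans Equiv.prodSubtypeFstEquivSubtypeProd

theorem natCard_pi_subtype_apply_le_iff [Fintype ι] [DecidableEq ι] [∀ i, Fintype (A i)]
    [∀ i, Nonempty (A i)] (j : ι) (P : A j → Prop) (δ : ℝ) :
    (Nat.card {a : ∀ i, A i // P (a j)} : ℝ) ≤ δ * Fintype.card (∀ i, A i) ↔
      (Nat.card {x // P x} : ℝ) ≤ δ * Fintype.card (A j) := by
  have hpos : (0 : ℝ) < Nat.card (∀ i : {i // i ≠ j}, A i) := Nat.cast_pos.2 Nat.card_pos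
  rw [natCard_pi_subtype_apply, ← Nat.card_eq_fintype_card, natCard_pi_eq_mul j,
    Nat.card_eq_fintype_card (α := A j), Nat.cast_mul, Nat.cast_mul, ← mul_assoc,
    mul_le_mul_iff_left₀ hpos]

theorem natCard_pi_map_ne_le_sum [Fintype ι] [∀ i, Finite (A i)] {B : ι → Type*}
    (u v : ∀ i, A i → B i) :
    Nat.card {a // Pi.map u a ≠ Pi.map v a} ≤
      ∑ i, Nat.card {a : ∀ i, A i // u i (a i) ≠ v i (a i)} := by
  have h_union : {a | Pi.map u a ≠ Pi.map v a} = ⋃ i, {a | u i (a i) ≠ v i (a i)} := by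
    ext a
    simp [funext_iff]
  have h_le := Set.ncard_iUnion_le_of_fintype fun i ↦ {a : ∀ i, A i | u i (a i) ≠ v i (a i)}
  rwa [← h_union] at h_le

end PiCard

namespace EpsSimilar

section Basic

variable {A : Type*} [Fintype A] {ε δ : ℝ} {u v : A → A}

theorem mono (h : EpsSimilar δ u v) (hδε : δ ≤ ε) : EpsSimilar ε u v :=
  h.trans (by gcongr)

theorem nonneg [Nonempty A] (h : EpsSimilar ε u v) : 0 ≤ ε :=
  nonneg_of_mul_nonneg_left ((Nat.cast_nonneg _).trans h) (Nat.cast_pos.2 Fintype.card_pos)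

end Basic

section Pi

variable {ι : Type*} [Fintype ι] [DecidableEq ι] {A : ι → Type*} [∀ i, Fintype (A i)]
  [∀ i, Nonempty (A i)] {u v : ∀ i, A i → A i}

theorem pi_map {δ : ι → ℝ} (h : ∀ i, EpsSimilar (δ i) (u i) (v i)) :
    EpsSimilar (∑ i, δ i) (Pi.map u) (Pi.map v) :=
  calc (Nat.card {a // Pi.map u a ≠ Pi.map v a} : ℝ)
      ≤ ∑ i, (Nat.card {a : ∀ i, A i // u i (a i) ≠ v i (a i)} : ℝ) := by
        exact_mod_cast natCard_pi_map_ne_le_sum u v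
    _ ≤ ∑ i, δ i * Fintype.card (∀ i, A i) :=
        Finset.sum_le_sum fun i _ ↦
          (natCard_pi_subtype_apply_le_iff i (fun x ↦ u i x ≠ v i x) _).2 (h i)
    _ = (∑ i, δ i) * Fintype.card (∀ i, A i) := (Finset.sum_mul ..).symm

theorem of_pi_map {ε : ℝ} (h : EpsSimilar ε (Pi.map u) (Pi.map v)) (j : ι) :
    EpsSimilar ε (u j) (v j) := by
  refine (natCard_pi_subtype_apply_le_iff j (fun x ↦ u j x ≠ v j x) ε).1
    (le_trans (Nat.cast_le.2 ?_) h)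
  exact Nat.card_le_card_of_injective _
    (Subtype.map_injective (fun _ ha hmap ↦ ha (congrFun hmap j)) Function.injective_id)

end Pi

end EpsSimilar

namespace IsQuasiAction

variable {G : Type*} [Group G] {F : Finset G}

theorem mono {A : Type*} [Fintype A] {φ : G → A → A} {δ ε : ℝ} (h : IsQuasiAction F δ φ)
    (hδε : δ ≤ ε) : IsQuasiAction F ε φ :=
  ⟨fun e he f hf ↦ (h.1 e he f hf).mono hδε, h.2.1.mono hδε,
    fun e he he1 hsim ↦ h.2.2 e he he1 (hsim.mono (by gcongr))⟩

theorem pi_map {ι : Type*} [Fintype ι] [DecidableEq ι] {H : ι → Type*} [∀ i, Group (H i)]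
    [∀ i, DecidableEq (H i)] (f : ∀ i, G →* H i) (hsep : ∀ g ∈ F, g ≠ 1 → ∃ i, f i g ≠ 1)
    {A : ι → Type*} [∀ i, Fintype (A i)] [∀ i, Nonempty (A i)] {δ : ι → ℝ}
    {φ : ∀ i, H i → A i → A i} (hφ : ∀ i, IsQuasiAction (F.image (f i)) (δ i) (φ i)) :
    IsQuasiAction F (∑ i, δ i) fun g ↦ Pi.map fun i ↦ φ i (f i g) := by
  refine ⟨fun x hx y hy ↦ ?mul, ?one, fun g hg hg1 hsim ↦ ?ne_one⟩
  case mul =>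
    refine EpsSimilar.pi_map (v := fun i a ↦ φ i (f i y) (φ i (f i x) a)) fun i ↦ ?_
    rw [map_mul]
    exact (hφ i).1 _ (Finset.mem_image_of_mem _ hx) _ (Finset.mem_image_of_mem _ hy)
  case one =>
    refine EpsSimilar.pi_map (v := fun _ ↦ id) fun i ↦ ?_
    rw [map_one]
    exact (hφ i).2.1
  case ne_one =>
    obtain ⟨j, hj⟩ := hsep g hg hg1
    have hδj : δ j ≤ ∑ i, δ i :=
      Finset.single_le_sum (fun i _ ↦ (hφ i).2.1.nonneg) (Finset.mem_univ j)
    have hsim_j : EpsSimilar (1 - ∑ i, δ i) (φ j (f j g)) id :=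
      EpsSimilar.of_pi_map (v := fun _ ↦ id) hsim j
    exact (hφ j).2.2 _ (Finset.mem_image_of_mem _ hg) hj (hsim_j.mono (by gcongr))

end IsQuasiAction

theorem IsSofic.of_separating_homs {G : Type*} [Group G] {I : Type*} {H : I → Type*}
    [∀ i, Group (H i)] (hH : ∀ i, IsSofic (H i)) (f : ∀ i, G →* H i)
    (hsep : ∀ g, g ≠ 1 → ∃ i, f i g ≠ 1) : IsSofic G := by
  classical
  intro F ε hε hε1
  -- `IsSofic` asks for a set in `Type`, so the product is indexed by `Fin n` and not by `F \ {1}`.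
  obtain ⟨n, i, hi⟩ : ∃ (n : ℕ) (i : Fin n → I), ∀ g ∈ F, g ≠ 1 → ∃ k, f (i k) g ≠ 1 := by
    let e := (F.erase 1).equivFin
    choose i hi using fun k ↦ hsep (e.symm k) (Finset.ne_of_mem_erase (e.symm k).2)
    refine ⟨_, i, fun g hg hg1 ↦ ?_⟩
    let k := e ⟨g, Finset.mem_erase.2 ⟨hg1, hg⟩⟩
    exact ⟨k, by simpa [k] using hi k⟩
  have hδ : 0 < ε / (n + 1) := by positivity
  have hδ1 : ε / (n + 1) < 1 := (div_le_self hε.le (by simp)).trans_lt hε1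
  have hsum : ∑ _k : Fin n, ε / (n + 1) ≤ ε := by
    rw [Fin.sum_const, nsmul_eq_mul, mul_div_left_comm]
    exact mul_le_of_le_one_right hε.le (div_le_one_of_le₀ (by simp) (by positivity))
  choose A _ _ φ hφ using fun k ↦ hH (i k) (F.image (f (i k))) _ hδ hδ1
  exact ⟨∀ k, A k, inferInstance, inferInstance, _,
    (IsQuasiAction.pi_map (fun k ↦ f (i k)) hi hφ).mono hsum⟩

/-- If a group embeds (via an injective group homomorphism) into a direct product of sofic
groups, then it is sofic. -/
theorem isSofic_of_injective_hom_pi {G : Type*} [Group G] {I : Type*} (Gi : I → Type*)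
    [∀ i, Group (Gi i)] (h : ∀ i, IsSofic (Gi i)) (f : G →* (∀ i, Gi i))
    (hf : Function.Injective f) : IsSofic G := by
  refine IsSofic.of_separating_homs h (fun i ↦ (Pi.evalMonoidHom Gi i).comp f) fun g hg ↦ ?_
  exact Function.ne_iff.1 ((map_ne_one_iff f hf).2 hg)
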